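/- Let ε > 0 and let d be sufficiently large in terms of ε. If G is an n-vertex graph with d ≤ δ(G) ≤ Δ(G) ≤ (1+ε)d, then the vertices of G can be partitioned into at most 2εn vertex-disjoint paths (each vertex lies on exactly one path; single vertices count as paths). -/

import Mathlib

open Finset
open scoped Classical
noncomputable section

def pth {V : Type} (g : V → Option V) : ℕ → V → List V
  | 0, v => [v]
  | k+1, v => v :: (match g v with | none => [] | some w => pth g k w)

lemma pth_head {V : Type} (g : V → Option V) (k : ℕ) (v : V) : ∃ l, pth g k v = v :: l := by
  cases k <;> simp [pth]

lemma pth_chain {V : Type} (g : V → Option V) (R : V → V → Prop)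
    (hR : ∀ v w, g v = some w → R v w) (k : ℕ) : ∀ v, (pth g k v).IsChain R := by
  induction k with
  | zero => intro v; simp [pth]
  | succ k ih =>
    intro v
    rw [pth]
    cases h : g v with
    | none => simp
    | some w =>
      obtain ⟨l, hl⟩ := pth_head g k w
      have := ih w
      simp only [hl] at this ⊢
      exact List.isChain_cons_cons.2 ⟨hR _ _ h, this⟩

lemma pth_pred {V : Type} (g : V → Option V) (k : ℕ) : ∀ s w, w ∈ pth g k s →
    w = s ∨ ∃ p ∈ pth g k s, g p = some w := by
  induction k with
  | zero => intro s w h; left; simpa [pth] using h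
  | succ k ih =>
    intro s w h
    rw [pth] at h ⊢
    cases hs : g s with
    | none => simp [hs] at h; exact Or.inl h
    | some x =>
      simp only [hs, List.mem_cons] at h ⊢
      rcases h with h | h
      · exact Or.inl h
      · right
        rcases ih _ _ h with h | ⟨p, hp, hp'⟩
        · exact ⟨s, Or.inl rfl, by rw [hs, h]⟩
        · exact ⟨p, Or.inr hp, hp'⟩

lemma pth_succ {V : Type} (g : V → Option V) (c : V → ℕ) (m : ℕ) (hc : ∀ v, c v < m)
    (hg : ∀ v w, g v = some w → c w = c v + 1) (k : ℕ) : ∀ s p w, m ≤ c s + k → p ∈ pth g k s →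
    g p = some w → w ∈ pth g k s := by
  induction k with
  | zero => intro s p w h; have := hc s; omega
  | succ k ih =>
    intro s p w hm hp hw
    rw [pth] at hp ⊢
    cases hs : g s with
    | none =>
      simp [hs] at hp
      subst hp
      simp [hs] at hw
    | some x =>
      simp only [hs, List.mem_cons] at hp ⊢
      right
      rcases hp with hp | hp
      · subst hp
        rw [hs] at hw
        cases hw
        obtain ⟨l, hl⟩ := pth_head g k w
        simp [hl]
      · have := hg _ _ hs
        exact ih x p w (by omega) hp hw

lemma pathcover {V : Type} [Fintype V] (G : SimpleGraph V) (m : ℕ) (c : V → ℕ) (hc : ∀ v, c v < m)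
    (g : V → Option V) (hg : ∀ v w, g v = some w → G.Adj v w ∧ c w = c v + 1)
    (inj : ∀ u v w, g u = some w → g v = some w → u = v) (t : ℕ)
    (ht : Fintype.card V ≤ (univ.filter (fun v => g v ≠ none)).card + t) :
    ∃ (k : ℕ) (f : Fin k → List V), k ≤ t ∧
      (∀ i, f i ≠ [] ∧ (f i).Nodup ∧ (f i).IsChain G.Adj) ∧ (∀ v : V, ∃! i, v ∈ f i) := by
  set S : Finset V := univ.filter (fun w => ∀ v, g v ≠ some w) with hS
  have hgc : ∀ v w, g v = some w → c w = c v + 1 := fun v w h => (hg v w h).2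
  have hcard : (univ.filter (fun v => g v ≠ none)).card ≤ Sᶜ.card := by
    apply Finset.card_le_card_of_injOn (fun v => (g v).getD v)
    · intro v hv
      simp only [coe_filter, mem_univ, true_and, Set.mem_ofPred_eq] at hv
      obtain ⟨w, hw⟩ := Option.ne_none_iff_exists'.1 hv
      simp only [coe_compl, Set.mem_compl_iff, mem_coe, hS, mem_filter, mem_univ, true_and, hw]
      push Not
      exact ⟨v, by simpa using hw⟩
    · intro u hu v hv huv
      simp only [coe_filter, mem_univ, true_and, Set.mem_ofPred_eq] at hu hv
      obtain ⟨w, hw⟩ := Option.ne_none_iff_exists'.1 hu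
      obtain ⟨x, hx⟩ := Option.ne_none_iff_exists'.1 hv
      simp [hw, hx] at huv
      subst huv
      exact inj _ _ _ hw hx
  have hSc := Finset.card_add_card_compl S
  refine ⟨S.card, fun i => pth g m (S.equivFin.symm i), by omega, ?_, ?_⟩
  · intro i
    refine ⟨?_, ?_, pth_chain g _ (fun v w h => (hg v w h).1) _ _⟩
    · obtain ⟨l, hl⟩ := pth_head g m (S.equivFin.symm i : V)
      simp [hl]
    · have h1 := pth_chain g (fun v w => c v < c w) (fun v w h => by have := hgc v w h; omega) m
        (S.equivFin.symm i : V)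
      have : IsTrans V (fun v w => c v < c w) := ⟨fun a b c h1 h2 => lt_trans h1 h2⟩
      have h2 := List.isChain_iff_pairwise.1 h1
      exact h2.imp (fun {a b} h => by rintro rfl; exact lt_irrefl _ h)
  · have hex : ∀ k, ∀ w, c w = k → ∃ s : S, w ∈ pth g m s := by
      intro k
      induction k with
      | zero =>
        intro w hw
        refine ⟨⟨w, ?_⟩, ?_⟩
        · simp only [hS, mem_filter, mem_univ, true_and]
          intro v hv; have := hgc _ _ hv; omega
        · obtain ⟨l, hl⟩ := pth_head g m w
          simp [hl]
      | succ k ih =>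
        intro w hw
        by_cases h : w ∈ S
        · refine ⟨⟨w, h⟩, ?_⟩
          obtain ⟨l, hl⟩ := pth_head g m w
          simp [hl]
        · simp only [hS, mem_filter, mem_univ, true_and] at h
          push Not at h
          obtain ⟨v, hv⟩ := h
          obtain ⟨s, hs⟩ := ih v (by have := hgc _ _ hv; omega)
          exact ⟨s, pth_succ g c m hc hgc m s v w (by omega) hs hv⟩
    have hun : ∀ k, ∀ w, c w = k → ∀ s s' : S, w ∈ pth g m s → w ∈ pth g m s' → s = s' := by
      have hst : ∀ (s : S) v, g v ≠ some (s : V) := fun s => by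
        have := s.2
        simp only [hS, mem_filter, mem_univ, true_and] at this
        exact this
      intro k
      induction k with
      | zero =>
        intro w hw s s' h h'
        rcases pth_pred _ _ _ _ h with h | ⟨p, hp, hp'⟩
        · rcases pth_pred _ _ _ _ h' with h' | ⟨p, hp, hp'⟩
          · exact Subtype.ext (h.symm.trans h')
          · have := hgc _ _ hp'; omega
        · have := hgc _ _ hp'; omega
      | succ k ih =>
        intro w hw s s' h h'
        rcases pth_pred _ _ _ _ h with h | ⟨p, hp, hp'⟩
        · rcases pth_pred _ _ _ _ h' with h' | ⟨p, hp, hp'⟩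
          · exact Subtype.ext (h.symm.trans h')
          · exact absurd (h ▸ hp') (hst s p)
        · rcases pth_pred _ _ _ _ h' with h' | ⟨q, hq, hq'⟩
          · exact absurd (h' ▸ hp') (hst s' p)
          · have := inj _ _ _ hp' hq'
            subst this
            exact ih p (by have := hgc _ _ hp'; omega) s s' hp hq
    intro v
    obtain ⟨s, hs⟩ := hex _ v rfl
    refine ⟨S.equivFin s, by simpa using hs, ?_⟩
    intro j hj
    have := hun _ v rfl _ _ hs hj
    rw [this]; simp

lemma hall_def {V : Type} [Fintype V] (N : V → Finset V) (t : ℕ)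
    (h : ∀ S : Finset V, S.card ≤ (S.biUnion N).card + t) :
    ∃ g : V → Option V, (∀ v w, g v = some w → w ∈ N v) ∧
      (∀ u v w, g u = some w → g v = some w → u = v) ∧
      Fintype.card V ≤ (univ.filter (fun v => g v ≠ none)).card + t := by
  have := (Finset.all_card_le_biUnion_card_iff_exists_injective
    (fun v => (N v).disjSum (univ : Finset (Fin t)))).1 (by
      intro S
      rcases S.eq_empty_or_nonempty with rfl | ⟨x, hx⟩
      · simp
      · calc S.card ≤ ((S.biUnion N).disjSum (univ : Finset (Fin t))).card := by
              simpa using h S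
          _ ≤ _ := by
            apply Finset.card_le_card
            intro y hy
            simp only [mem_biUnion]
            rcases y with y | y
            · simp at hy ⊢; exact hy
            · exact ⟨x, hx, by simp⟩)
  obtain ⟨f, hf, hfN⟩ := this
  have key : ∀ v w, (f v).getLeft? = some w → f v = Sum.inl w := by
    intro v w h; simpa using h
  refine ⟨fun v => (f v).getLeft?, ?_, ?_, ?_⟩
  · intro v w h
    have := hfN v
    rw [key _ _ h] at this
    simpa using this
  · intro u v w hu hv
    exact hf ((key _ _ hu).trans (key _ _ hv).symm)
  · have h1 : (univ.filter (fun v => ¬ ((f v).getLeft? ≠ none))).card ≤ t := by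
      calc _ ≤ ((univ : Finset (Fin t)).map ⟨Sum.inr, Sum.inr_injective⟩ : Finset (V ⊕ Fin t)).card := by
            apply Finset.card_le_card_of_injOn f
            · intro v hv
              cases h : f v with
              | inl y => simp [h] at hv
              | inr y => simp
            · exact hf.injOn
        _ = t := by simp
    have h2 := Finset.card_filter_add_card_filter_not (s := (univ : Finset V)) (fun v => ((f v).getLeft? ≠ none))
    rw [Finset.card_univ] at h2
    show Fintype.card V ≤ (univ.filter (fun v => (f v).getLeft? ≠ none)).card + t
    omega

lemma pairsum {V : Type} [Fintype V] (k : ℕ) (F : Fin (k+1) → Fin (k+1) → ℝ) (u v : V) (huv : u ≠ v) :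
    ∑ c : V → Fin (k+1), F (c u) (c v) * ((k:ℝ)+1)^2 =
      (Fintype.card (V → Fin (k+1)) : ℝ) * ∑ i, ∑ j, F i j := by
  have h1 : ∀ a b : Fin (k+1), ∑ c : V → Fin (k+1), F (c u) (c v) =
      ∑ c : V → Fin (k+1), F (c u + a) (c v + b) := by
    intro a b
    rw [← Equiv.sum_comp (Equiv.addRight (Pi.single u a + Pi.single v b : V → Fin (k+1)))]
    apply Finset.sum_congr rfl
    intro c _
    simp [huv, huv.symm]
  have h2 : ∑ a : Fin (k+1), ∑ b : Fin (k+1), ∑ c : V → Fin (k+1), F (c u) (c v) =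
     ∑ a : Fin (k+1), ∑ b : Fin (k+1), ∑ c : V → Fin (k+1), F (c u + a) (c v + b) :=
    Finset.sum_congr rfl fun a _ => Finset.sum_congr rfl fun b _ => h1 a b
  have h3 : ∑ a : Fin (k+1), ∑ b : Fin (k+1), ∑ c : V → Fin (k+1), F (c u + a) (c v + b) =
     ∑ c : V → Fin (k+1), ∑ i, ∑ j, F i j := by
    rw [Finset.sum_congr rfl fun a _ => Finset.sum_comm, Finset.sum_comm]
    apply Finset.sum_congr rfl
    intro c _
    refine Eq.trans ?_ (Equiv.sum_comp (Equiv.addLeft (c u)) (fun i => ∑ j, F i j))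
    apply Finset.sum_congr rfl
    intro a _
    exact Equiv.sum_comp (Equiv.addLeft (c v)) (fun j => F (c u + a) j)
  rw [h3] at h2
  simp only [Finset.sum_const, Finset.card_univ, Fintype.card_fin, nsmul_eq_mul] at h2
  rw [← h2, ← Finset.sum_mul]
  push_cast
  ring

def AA (k : ℕ) (i j : Fin (k+1)) : ℝ := if j.val = i.val + 1 then 1 else 0
def BB (k : ℕ) (i j : Fin (k+1)) : ℝ := if i = j then 1 else 0

lemma sumAA (k : ℕ) : ∑ i, ∑ j, AA k i j = k := by
  rw [Fin.sum_univ_castSucc]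
  have h1 : ∀ i : Fin k, ∑ j, AA k i.castSucc j = 1 := by
    intro i
    rw [Finset.sum_eq_single i.succ]
    · simp [AA]
    · intro j _ hj
      simp only [AA, ite_eq_right_iff, one_ne_zero, imp_false]
      intro h
      apply hj
      ext
      simpa using h
    · simp
  have h2 : ∑ j, AA k (Fin.last k) j = 0 := by
    apply Finset.sum_eq_zero
    intro j _
    simp only [AA, ite_eq_right_iff, one_ne_zero, imp_false, Fin.val_last]
    have := j.2
    omega
  simp [h1, h2]

lemma sumBB (k : ℕ) : ∑ i, ∑ j, BB k i j = k + 1 := by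
  simp [BB]

lemma coloring {V : Type} [Fintype V] (N : V → Finset V) (hN : ∀ v, v ∉ N v) (k : ℕ) (d D K : ℝ)
    (hK : 0 ≤ K) (hd : ∀ v, d ≤ (N v).card) (hD : ∀ v, ((N v).card : ℝ) ≤ D) :
    ∃ c : V → Fin (k+1), (Fintype.card V : ℝ) * (d * k / ((k:ℝ)+1)^2 - K * D) ≤
      ∑ u, (∑ v ∈ N u, AA k (c u) (c v) -
        K * (∑ v ∈ N u, ∑ w ∈ N u, BB k (c v) (c w) - ((N u).card : ℝ)^2 / ((k:ℝ)+1))) := by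
  set M : ℝ := (Fintype.card (V → Fin (k+1)) : ℝ) with hM
  have hM0 : 0 ≤ M := by positivity
  have hm : (0:ℝ) < (k:ℝ) + 1 := by positivity
  have hA : ∀ u v : V, u ≠ v → ∑ c : V → Fin (k+1), AA k (c u) (c v) = M * k / ((k:ℝ)+1)^2 := by
    intro u v huv
    have := pairsum k (AA k) u v huv
    rw [sumAA, ← Finset.sum_mul] at this
    rw [eq_div_iff (by positivity), this]
  have hB : ∀ u v : V, ∑ c : V → Fin (k+1), BB k (c u) (c v) =
      M / ((k:ℝ)+1) + (if u = v then M * (1 - 1 / ((k:ℝ)+1)) else 0) := by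
    intro u v
    by_cases huv : u = v
    · subst huv
      simp only [BB, if_true, Finset.sum_const, Finset.card_univ, nsmul_eq_mul]
      rw [← hM]
      ring
    · have := pairsum k (BB k) u v huv
      rw [sumBB, ← Finset.sum_mul] at this
      rw [if_neg huv, add_zero, eq_div_iff (by positivity)]
      have h3 : (∑ c : V → Fin (k+1), BB k (c u) (c v)) * ((k:ℝ)+1) * ((k:ℝ)+1) = M * ((k:ℝ)+1) := by
        rw [← this]; ring
      exact mul_right_cancel₀ hm.ne' h3
  have hne : (univ : Finset (V → Fin (k+1))).Nonempty := univ_nonempty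
  obtain ⟨c, -, hc⟩ := Finset.exists_le_of_sum_le hne (f := fun _ => (Fintype.card V : ℝ) * (d * k / ((k:ℝ)+1)^2 - K * D)) (g := fun c => ∑ u, (∑ v ∈ N u, AA k (c u) (c v) -
        K * (∑ v ∈ N u, ∑ w ∈ N u, BB k (c v) (c w) - ((N u).card : ℝ)^2 / ((k:ℝ)+1)))) (by
    rw [Finset.sum_comm, Finset.sum_const, Finset.card_univ, nsmul_eq_mul, ← hM]
    have h1 : M * ((Fintype.card V : ℝ) * (d * k / ((k:ℝ)+1)^2 - K * D)) =
       ∑ u : V, M * (d * k / ((k:ℝ)+1)^2 - K * D) := by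
      rw [Finset.sum_const, Finset.card_univ, nsmul_eq_mul]; ring
    rw [h1]
    apply Finset.sum_le_sum
    intro u _
    rw [Finset.sum_sub_distrib, ← Finset.mul_sum, Finset.sum_sub_distrib]
    have e1 : ∑ c : V → Fin (k+1), ∑ v ∈ N u, AA k (c u) (c v) = (N u).card * (M * k / ((k:ℝ)+1)^2) := by
      rw [Finset.sum_comm, Finset.sum_congr rfl (fun v hv => hA u v (by rintro rfl; exact hN _ hv))]
      simp
    have e2 : ∑ c : V → Fin (k+1), ∑ v ∈ N u, ∑ w ∈ N u, BB k (c v) (c w) =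
        (N u).card * ((N u).card * (M / ((k:ℝ)+1)) + M * (1 - 1 / ((k:ℝ)+1))) := by
      rw [Finset.sum_comm]
      have : ∀ v ∈ N u, ∑ c : V → Fin (k+1), ∑ w ∈ N u, BB k (c v) (c w) =
          ((N u).card * (M / ((k:ℝ)+1)) + M * (1 - 1 / ((k:ℝ)+1))) := by
        intro v hv
        rw [Finset.sum_comm, Finset.sum_congr rfl (fun w _ => hB v w), Finset.sum_add_distrib]
        simp [hv]
      rw [Finset.sum_congr rfl this, Finset.sum_const, nsmul_eq_mul]
    rw [e1, e2, Finset.sum_const, Finset.card_univ, nsmul_eq_mul, ← hM]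
    have h2 : M * (d * k / ((k:ℝ)+1)^2) ≤ (N u).card * (M * k / ((k:ℝ)+1)^2) := by
      have : M * (d * k / ((k:ℝ)+1)^2) = d * (M * k / ((k:ℝ)+1)^2) := by ring
      rw [this]
      exact mul_le_mul_of_nonneg_right (hd u) (by positivity)
    have h3 : (((N u).card : ℝ) * ((N u).card * (M / ((k:ℝ)+1)) + M * (1 - 1 / ((k:ℝ)+1))) -
        M * (((N u).card : ℝ)^2 / ((k:ℝ)+1))) ≤ D * M := by
      have e : (((N u).card : ℝ) * ((N u).card * (M / ((k:ℝ)+1)) + M * (1 - 1 / ((k:ℝ)+1))) -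
        M * (((N u).card : ℝ)^2 / ((k:ℝ)+1))) = (N u).card * M - (N u).card * M * (1 / ((k:ℝ)+1)) := by
        ring
      rw [e]
      have : 0 ≤ ((N u).card : ℝ) * M * (1 / ((k:ℝ)+1)) := by positivity
      nlinarith [mul_le_mul_of_nonneg_right (hD u) hM0]
    have h4 := mul_le_mul_of_nonneg_left h3 hK
    nlinarith)
  exact ⟨c, hc⟩

lemma var_eq {V : Type} (k : ℕ) (s : Finset V) (c : V → Fin (k+1)) :
    ∑ j, (∑ v ∈ s, (if c v = j then (1:ℝ) else 0) - s.card / ((k:ℝ)+1))^2 =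
      ∑ v ∈ s, ∑ w ∈ s, BB k (c v) (c w) - (s.card : ℝ)^2 / ((k:ℝ)+1) := by
  set X : Fin (k+1) → ℝ := fun j => ∑ v ∈ s, (if c v = j then (1:ℝ) else 0) with hX
  have hm : (0:ℝ) < (k:ℝ) + 1 := by positivity
  have h1 : ∑ j, X j = s.card := by
    simp only [hX]
    rw [Finset.sum_comm]
    simp
  have h2 : ∑ j, X j ^ 2 = ∑ v ∈ s, ∑ w ∈ s, BB k (c v) (c w) := by
    simp only [hX, sq, Finset.sum_mul_sum]
    rw [Finset.sum_comm]
    apply Finset.sum_congr rfl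
    intro v _
    rw [Finset.sum_comm]
    apply Finset.sum_congr rfl
    intro w _
    rw [Finset.sum_eq_single (c v)]
    · simp [BB, eq_comm]
    · intro b _ hb
      simp [hb.symm]
    · simp
  change ∑ j, (X j - s.card / ((k:ℝ)+1))^2 = _
  simp only [sub_sq]
  rw [Finset.sum_add_distrib, Finset.sum_sub_distrib, h2, ← Finset.sum_mul, ← Finset.mul_sum, h1]
  simp
  field_simp
  ring

lemma excess {V : Type} (k : ℕ) (s : Finset V) (c : V → Fin (k+1)) (a L : ℝ) (ha : 0 < a)
    (hL : a + s.card / ((k:ℝ)+1) ≤ L) (j : Fin (k+1)) :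
    ∑ v ∈ s, (if c v = j then (1:ℝ) else 0) ≤
      L + (∑ v ∈ s, ∑ w ∈ s, BB k (c v) (c w) - (s.card : ℝ)^2 / ((k:ℝ)+1)) / (4 * a) := by
  set X : Fin (k+1) → ℝ := fun j => ∑ v ∈ s, (if c v = j then (1:ℝ) else 0) with hX
  have h3 := var_eq k s c
  rw [← h3]
  have h4 : (X j - s.card / ((k:ℝ)+1))^2 ≤ ∑ j, (X j - s.card / ((k:ℝ)+1))^2 :=
    Finset.single_le_sum (f := fun j => (X j - s.card / ((k:ℝ)+1))^2) (fun i _ => sq_nonneg _) (mem_univ j)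
  have h5 : X j - s.card / ((k:ℝ)+1) - a ≤ (X j - s.card / ((k:ℝ)+1))^2 / (4 * a) := by
    rw [le_div_iff₀ (by positivity)]
    nlinarith [sq_nonneg (X j - s.card / ((k:ℝ)+1) - 2 * a)]
  have h6 := div_le_div_of_nonneg_right h4 (by positivity : 0 ≤ 4 * a)
  change X j ≤ _
  linarith

lemma out_le {V : Type} (k : ℕ) (s : Finset V) (c : V → Fin (k+1)) (a L : ℝ) (ha : 0 < a)
    (hL : a + s.card / ((k:ℝ)+1) ≤ L) (i : Fin (k+1)) :
    ∑ v ∈ s, AA k i (c v) ≤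
      L + (∑ v ∈ s, ∑ w ∈ s, BB k (c v) (c w) - (s.card : ℝ)^2 / ((k:ℝ)+1)) / (4 * a) := by
  refine le_trans ?_ (excess k s c a L ha hL (i + 1))
  apply Finset.sum_le_sum
  intro v _
  unfold AA
  split_ifs with h1 h2
  · exact le_rfl
  · exfalso
    apply h2
    ext
    have := (c v).2
    rw [Fin.val_add_one_of_lt, h1]
    rw [Fin.lt_def, Fin.val_last]; omega
  · exact zero_le_one
  · exact le_rfl

lemma in_le {V : Type} (k : ℕ) (s : Finset V) (c : V → Fin (k+1)) (a L : ℝ) (ha : 0 < a)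
    (hL : a + s.card / ((k:ℝ)+1) ≤ L) (i : Fin (k+1)) :
    ∑ v ∈ s, AA k (c v) i ≤
      L + (∑ v ∈ s, ∑ w ∈ s, BB k (c v) (c w) - (s.card : ℝ)^2 / ((k:ℝ)+1)) / (4 * a) := by
  refine le_trans ?_ (excess k s c a L ha hL (i - 1))
  apply Finset.sum_le_sum
  intro v _
  unfold AA
  split_ifs with h1 h2
  · exact le_rfl
  · exfalso
    apply h2
    rw [eq_sub_iff_add_eq]
    ext
    have := i.2
    rw [Fin.val_add_one_of_lt, h1]
    rw [Fin.lt_def, Fin.val_last]; omega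
  · exact zero_le_one
  · exact le_rfl

lemma cover {V : Type} [Fintype V] (G : SimpleGraph V) (k : ℕ) (c : V → Fin (k+1)) (a L D : ℝ)
    (ha : 0 < a) (hD : ∀ v, ((G.neighborFinset v).card : ℝ) ≤ D) (hL : a + D / ((k:ℝ)+1) ≤ L)
    (S : Finset V) :
    ∑ u, (∑ v ∈ G.neighborFinset u, AA k (c u) (c v) -
      (1 / (2 * a)) * (∑ v ∈ G.neighborFinset u, ∑ w ∈ G.neighborFinset u, BB k (c v) (c w)
        - ((G.neighborFinset u).card : ℝ)^2 / ((k:ℝ)+1))) ≤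
    L * ((Fintype.card V : ℝ) - S.card +
      (S.biUnion (fun u => (G.neighborFinset u).filter (fun v => (c v).val = (c u).val + 1))).card) := by
  set T := S.biUnion (fun u => (G.neighborFinset u).filter (fun v => (c v).val = (c u).val + 1)) with hT
  set Q : V → ℝ := fun u => (∑ v ∈ G.neighborFinset u, ∑ w ∈ G.neighborFinset u, BB k (c v) (c w)
        - ((G.neighborFinset u).card : ℝ)^2 / ((k:ℝ)+1)) with hQ
  have hm : (0:ℝ) < (k:ℝ) + 1 := by positivity
  have hL' : ∀ v, a + (G.neighborFinset v).card / ((k:ℝ)+1) ≤ L := fun v => by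
    have := div_le_div_of_nonneg_right (hD v) hm.le
    linarith
  have hQ0 : ∀ u, 0 ≤ Q u / (4 * a) := by
    intro u
    simp only [hQ]
    rw [← var_eq]
    positivity
  have hA0 : ∀ i j, 0 ≤ AA k i j := by intro i j; unfold AA; split_ifs <;> norm_num
  have h1 : ∑ u ∈ Sᶜ, ∑ v ∈ G.neighborFinset u, AA k (c u) (c v) ≤
      L * ((Fintype.card V : ℝ) - S.card) + ∑ u, Q u / (4 * a) := by
    calc _ ≤ ∑ u ∈ Sᶜ, (L + Q u / (4 * a)) :=
          Finset.sum_le_sum fun u _ => out_le k _ c a L ha (hL' u) (c u)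
      _ = L * ((Fintype.card V : ℝ) - S.card) + ∑ u ∈ Sᶜ, Q u / (4 * a) := by
          have := Finset.card_add_card_compl S
          have h : (S.card : ℝ) + (Sᶜ.card : ℝ) = Fintype.card V := by exact_mod_cast this
          rw [Finset.sum_add_distrib, Finset.sum_const, nsmul_eq_mul, ← h]
          ring
      _ ≤ _ := by
          apply add_le_add_right
          exact Finset.sum_le_sum_of_subset_of_nonneg (subset_univ _) (fun u _ _ => hQ0 u)
  have h2 : ∑ u ∈ S, ∑ v ∈ G.neighborFinset u, AA k (c u) (c v) ≤
      L * T.card + ∑ u, Q u / (4 * a) := by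
    calc _ ≤ ∑ u ∈ S, ∑ v ∈ T, (if G.Adj u v then AA k (c u) (c v) else 0) := by
          apply Finset.sum_le_sum
          intro u hu
          rw [← Finset.sum_filter]
          have e : ∑ v ∈ G.neighborFinset u, AA k (c u) (c v) =
              ∑ v ∈ (G.neighborFinset u).filter (fun v => (c v).val = (c u).val + 1), AA k (c u) (c v) := by
            rw [Finset.sum_filter]
            apply Finset.sum_congr rfl
            intro v _
            unfold AA
            split_ifs <;> rfl
          rw [e]
          apply Finset.sum_le_sum_of_subset_of_nonneg
          · intro v hv
            rw [mem_filter]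
            refine ⟨mem_biUnion.2 ⟨u, hu, hv⟩, ?_⟩
            rw [mem_filter] at hv
            simpa using hv.1
          · intro _ _ _; exact hA0 _ _
      _ ≤ ∑ u, ∑ v ∈ T, (if G.Adj u v then AA k (c u) (c v) else 0) := by
          apply Finset.sum_le_sum_of_subset_of_nonneg (subset_univ _)
          intro u _ _
          apply Finset.sum_nonneg
          intro v _
          split_ifs
          · exact hA0 _ _
          · exact le_rfl
      _ = ∑ v ∈ T, ∑ u ∈ G.neighborFinset v, AA k (c u) (c v) := by
          rw [Finset.sum_comm]
          apply Finset.sum_congr rfl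
          intro v _
          rw [← Finset.sum_filter]
          apply Finset.sum_congr _ (fun _ _ => rfl)
          ext u
          simp [G.adj_comm]
      _ ≤ ∑ v ∈ T, (L + Q v / (4 * a)) :=
          Finset.sum_le_sum fun u _ => in_le k _ c a L ha (hL' u) (c u)
      _ = L * T.card + ∑ u ∈ T, Q u / (4 * a) := by
          rw [Finset.sum_add_distrib, Finset.sum_const, nsmul_eq_mul]
          ring
      _ ≤ _ := by
          apply add_le_add_right
          exact Finset.sum_le_sum_of_subset_of_nonneg (subset_univ _) (fun u _ _ => hQ0 u)
  have h3 := Finset.sum_add_sum_compl S (fun u => ∑ v ∈ G.neighborFinset u, AA k (c u) (c v))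
  rw [Finset.sum_sub_distrib, ← Finset.mul_sum, ← h3]
  rw [← Finset.sum_div] at h1 h2
  have h4 : 1 / (2 * a) * ∑ u, Q u = (∑ u, Q u) / (4 * a) + (∑ u, Q u) / (4 * a) := by
    field_simp; ring
  change _ - 1 / (2 * a) * ∑ u, Q u ≤ _
  rw [h4]
  linarith

theorem stmt_7 (ε : ℝ) (hε : 0 < ε) :
    ∃ d₀ : ℕ, ∀ d : ℕ, d₀ ≤ d →
      ∀ (V : Type) [Fintype V], ∀ G : SimpleGraph V,
        (∀ v : V, (d : ℝ) ≤ ((G.neighborSet v).ncard : ℝ)) →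
        (∀ v : V, ((G.neighborSet v).ncard : ℝ) ≤ (1 + ε) * d) →
        ∃ (k : ℕ) (f : Fin k → List V),
          (k : ℝ) ≤ 2 * ε * (Fintype.card V) ∧
          (∀ i, f i ≠ [] ∧ (f i).Nodup ∧ (f i).Chain' G.Adj) ∧
          (∀ v : V, ∃! i, v ∈ f i) := by
  obtain ⟨k, hk⟩ := exists_nat_ge (4 / ε)
  obtain ⟨d₁, hd₁⟩ := exists_nat_ge (4 * ((k:ℝ)+1)^2 / ε^2)
  refine ⟨d₁ + 1, ?_⟩
  intro d hd V _ G hlo hhi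
  have hnc : ∀ v, (G.neighborSet v).ncard = (G.neighborFinset v).card := by
    intro v
    rw [← Set.ncard_coe_finset, SimpleGraph.coe_neighborFinset]
  simp only [hnc] at hlo hhi
  have hdR : (d₁ : ℝ) + 1 ≤ d := by exact_mod_cast hd
  have hd0 : (0:ℝ) < d := by
    have : (0:ℝ) ≤ d₁ := Nat.cast_nonneg _
    linarith
  set m : ℝ := (k:ℝ) + 1 with hm
  have hm0 : 0 < m := by positivity
  set D : ℝ := (1 + ε) * d with hDdef
  have hD0 : 0 < D := by positivity
  set a : ℝ := ε / 2 * D / m with hadef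
  have ha : 0 < a := by positivity
  set L : ℝ := (1 + ε / 2) * D / m with hLdef
  have hL0 : 0 < L := by positivity
  have hLe : a + D / m ≤ L := by
    rw [hadef, hLdef]; apply le_of_eq; ring
  obtain ⟨c, hc⟩ := coloring (fun v => G.neighborFinset v) (fun v => by simp) k d D (1 / (2 * a))
    (by positivity) hlo hhi
  have harith : L * (1 - 2 * ε) ≤ d * k / m^2 - 1 / (2 * a) * D := by
    have e1 : 1 / (2 * a) * D = m / ε := by
      rw [hadef]; field_simp
    have hkm : (k:ℝ) = m - 1 := by rw [hm]; ring
    rw [e1, hLdef, hDdef, hkm]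
    have h4 : 4 ≤ ε * m := by
      rw [div_le_iff₀ hε] at hk
      nlinarith
    have h5 : 4 * m^2 ≤ ε^2 * d := by
      rw [div_le_iff₀ (by positivity)] at hd₁
      nlinarith [sq_nonneg ε]
    have e2 : (1 + ε / 2) * ((1 + ε) * d) / m * (1 - 2 * ε) = d / m * ((1 + ε / 2) * (1 + ε) * (1 - 2 * ε)) := by
      ring
    have e3 : d * (m - 1) / m^2 - m / ε = d / m * (1 - 1 / m - m^2 / (ε * d)) := by
      field_simp
    rw [e2, e3]
    apply mul_le_mul_of_nonneg_left _ (by positivity)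
    have h6 : 1 / m ≤ ε / 4 := by
      rw [div_le_div_iff₀ hm0 (by norm_num)]; linarith
    have h7 : m^2 / (ε * d) ≤ ε / 4 := by
      rw [div_le_div_iff₀ (by positivity) (by norm_num)]; nlinarith
    have h8 : (1 + ε / 2) * (1 + ε) * (1 - 2 * ε) ≤ 1 - ε / 2 := by
      have : 0 < ε^2 := by positivity
      have : 0 < ε^3 := by positivity
      nlinarith
    linarith
  have hhall : ∀ S : Finset V, S.card ≤
      (S.biUnion (fun u => (G.neighborFinset u).filter (fun v => (c v).val = (c u).val + 1))).card
        + ⌊2 * ε * (Fintype.card V)⌋₊ := by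
    intro S
    have h1 := cover G k c a L D ha hhi hLe S
    have h2 := hc.trans h1
    set T := S.biUnion (fun u => (G.neighborFinset u).filter (fun v => (c v).val = (c u).val + 1))
    have h3 := mul_le_mul_of_nonneg_left harith (Nat.cast_nonneg (α := ℝ) (Fintype.card V))
    have h4 : L * ((Fintype.card V : ℝ) * (1 - 2 * ε)) ≤ L * ((Fintype.card V : ℝ) - S.card + T.card) := by
      calc _ = (Fintype.card V : ℝ) * (L * (1 - 2 * ε)) := by ring
        _ ≤ _ := h3.trans h2
    have h5 := le_of_mul_le_mul_left h4 hL0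
    have h6 : ((S.card - T.card : ℕ) : ℝ) ≤ 2 * ε * (Fintype.card V) := by
      rcases le_total T.card S.card with h | h
      · rw [Nat.cast_sub h]; linarith
      · rw [Nat.sub_eq_zero_of_le h]; simp; positivity
    have h7 := Nat.le_floor h6
    omega
  obtain ⟨g, hg1, hg2, hg3⟩ := hall_def _ _ hhall
  obtain ⟨K, f, hK, hf1, hf2⟩ := pathcover G (k+1) (fun v => (c v).val) (fun v => (c v).2) g
    (fun v w h => by simpa using hg1 v w h) hg2 _ hg3
  refine ⟨K, f, ?_, hf1, hf2⟩
  exact (Nat.cast_le.2 hK).trans (Nat.floor_le (by positivity))
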